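/- arXiv:2503.19181 — 2 statements merged into one kernel-verified Lean document; each statement's English description precedes it below -/
import Mathlib

section
/- Let n ≥ 5 and let G be a finite simple graph. Let the graphic matroid M(K_n) have point set {𝟙_i + 𝟙_j : i ≠ j in Fin n} ⊆ (Fin n → ZMod 2) and let M(G) have point set E_G = {𝟙_u + 𝟙_v : uv ∈ E(G)} ⊆ (V(G) → ZMod 2). Then for every matroid homomorphism τ from M(K_n) to M(G) there exists an injective map f : Fin n → V(G) such that f(i) and f(j) are adjacent in G for all i ≠ j and τ(𝟙_i + 𝟙_j) = 𝟙_{f(i)} + 𝟙_{f(j)} for all i ≠ j; that is, τ maps M(K_n) isomorphically onto a copy of M(K_n) in M(G). -/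
/-- A circuit of a binary matroid with point set `E`: a minimal nonempty subset summing to 0. -/
def IsCircuit {P : Type*} [AddCommGroup P] (E Z : Finset P) : Prop :=
  Z ⊆ E ∧ Z.Nonempty ∧ ∑ e ∈ Z, e = 0 ∧
    ∀ Z' ⊆ Z, Z'.Nonempty → ∑ e ∈ Z', e = 0 → Z' = Z

/-- A cocircuit: a minimal nonempty subset meeting every circuit evenly. -/
def IsCocircuit {P : Type*} [AddCommGroup P] [DecidableEq P] (E C : Finset P) : Prop :=
  C ⊆ E ∧ C.Nonempty ∧ (∀ Z, IsCircuit E Z → Even (C ∩ Z).card) ∧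
    ∀ C' ⊆ C, C'.Nonempty → (∀ Z, IsCircuit E Z → Even (C' ∩ Z).card) → C' = C

/-- A matroid homomorphism from the matroid on `E` to the matroid on `F`. -/
def IsMHom {P Q : Type*} [AddCommGroup P] [AddCommGroup Q]
    (E : Finset P) (F : Finset Q) (τ : P → Q) : Prop :=
  (∀ e ∈ E, τ e ∈ F) ∧ ∀ Z, IsCircuit E Z → ∑ e ∈ Z, τ e = 0

/-- Adjacency in the recolouring graph: the maps differ exactly on a cocircuit. -/
def MAdj {P Q : Type*} [AddCommGroup P] [AddCommGroup Q] [DecidableEq P]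
    (E : Finset P) (τ τ' : P → Q) : Prop :=
  ∃ C, IsCocircuit E C ∧ ∀ e ∈ E, (τ e ≠ τ' e ↔ e ∈ C)

/-- One step of a walk in `mCol(E,F)`: both maps are homomorphisms and they are
equal (as maps on `E`) or adjacent. -/
def MStep {P Q : Type*} [AddCommGroup P] [AddCommGroup Q] [DecidableEq P]
    (E : Finset P) (F : Finset Q) (τ τ' : P → Q) : Prop :=
  IsMHom E F τ ∧ IsMHom E F τ' ∧ ((∀ e ∈ E, τ e = τ' e) ∨ MAdj E τ τ')

/-- Joined by a walk in the recolouring graph `mCol(E,F)`. -/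
def MWalk {P Q : Type*} [AddCommGroup P] [AddCommGroup Q] [DecidableEq P]
    (E : Finset P) (F : Finset Q) : (P → Q) → (P → Q) → Prop :=
  Relation.ReflTransGen (MStep E F)

/-- The indicator vector of a vertex. -/
def ind {V : Type*} [DecidableEq V] (u : V) : V → ZMod 2 := Pi.single u 1

/-- The decision graph of a set `F` of nonzero vectors. -/
def decisionGraph {m : ℕ} (F : Finset (Fin m → ZMod 2)) : SimpleGraph (Fin m → ZMod 2) where
  Adj v w := v + w ∈ F ∧ v ≠ w
  symm := by
    constructor
    intro v w h
    exact ⟨by rw [add_comm]; exact h.1, h.2.symm⟩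
  loopless := by
    constructor
    intro v h
    exact h.2 rfl

/-- The weight of a vector: its number of nonzero coordinates. -/
def wt {n : ℕ} (e : Fin n → ZMod 2) : ℕ := (Finset.univ.filter fun i => e i ≠ 0).card

/-!
Identify an edge `uv` with the vector `𝟙_u + 𝟙_v`. Triangles of `K_n` are circuits, so a
homomorphism `τ` out of `M(K_n)` has a potential: `τ (𝟙_i + 𝟙_j) = φ i + φ j`. Fix an index `o`.
The vectors `φ o + φ j`, `j ≠ o`, are at least four distinct edges of `G`, and any two of them meet
because their sum `φ i + φ j` is again an edge. Pairwise meeting edges form a star or lie in a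
triangle, and a triangle has only three edges; so they share a vertex `c`, say
`φ o + φ j = 𝟙_c + 𝟙_{f j}`. With `f o = c`, the potential `φ` is a translate of `j ↦ 𝟙_{f j}`.
-/

theorem one_lt_card_of_sum_eq_zero {P : Type*} [AddCommMonoid P] {Z : Finset P}
    (h0 : 0 ∉ Z) (hne : Z.Nonempty) (hsum : ∑ e ∈ Z, e = 0) : 1 < Z.card := by
  by_contra! hcard
  obtain ⟨e, rfl⟩ := Finset.card_eq_one.1 (le_antisymm hcard hne.card_pos)
  exact h0 (by simpa using hsum.symm)

theorem isCircuit_of_card_le_three {P : Type*} [AddCommGroup P] {E Z : Finset P} (hZE : Z ⊆ E)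
    (h0 : 0 ∉ Z) (hne : Z.Nonempty) (hsum : ∑ e ∈ Z, e = 0) (hcard : Z.card ≤ 3) :
    IsCircuit E Z := by
  classical
  refine ⟨hZE, hne, hsum, fun Z' hZ' hne' hsum' => ?_⟩
  by_contra hZZ'
  have hdiff_ne : (Z \ Z').Nonempty :=
    Finset.sdiff_nonempty.2 fun h => hZZ' (hZ'.antisymm h)
  have hdiff_sum : ∑ e ∈ Z \ Z', e = 0 := by
    simpa [hsum, hsum'] using Finset.sum_sdiff (f := fun e => e) hZ'
  have hZ'_card := one_lt_card_of_sum_eq_zero (fun h => h0 (hZ' h)) hne' hsum'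
  have hdiff_card := one_lt_card_of_sum_eq_zero
    (fun h => h0 (Finset.sdiff_subset h)) hdiff_ne hdiff_sum
  have := Finset.card_sdiff_add_card_eq_card hZ'
  omega

namespace IsMHom

variable {P Q : Type*} [AddCommGroup P] [AddCommGroup Q] {E : Finset P} {F : Finset Q} {τ : P → Q}

theorem map_zero (hτ : IsMHom E F τ) (h0 : 0 ∈ E) : τ 0 = 0 := by
  have hcircuit : IsCircuit E {0} :=
    ⟨by simpa using h0, by simp, by simp, fun Z' hZ' hne _ =>
      (Finset.subset_singleton_iff.1 hZ').resolve_left hne.ne_empty⟩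
  simpa using hτ.2 {0} hcircuit

theorem map_add [Module (ZMod 2) P] [Module (ZMod 2) Q] (hτ : IsMHom E F τ) {x y : P}
    (hx : x ∈ E) (hy : y ∈ E) (hxy : x + y ∈ E) : τ (x + y) = τ x + τ y := by
  classical
  rcases eq_or_ne x 0 with rfl | hx0
  · simp [hτ.map_zero hx]
  rcases eq_or_ne y 0 with rfl | hy0
  · simp [hτ.map_zero hy]
  rcases eq_or_ne x y with rfl | hne
  · rw [ZModModule.add_self] at hxy
    rw [ZModModule.add_self, ZModModule.add_self, hτ.map_zero hxy]
  have hxy0 : x + y ≠ 0 := fun h => hne (by rwa [← ZModModule.sub_eq_add, sub_eq_zero] at h)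
  have hxy_notMem : x + y ∉ ({x, y} : Finset P) := by simp [hx0, hy0]
  have hcircuit : IsCircuit E {x + y, x, y} := by
    apply isCircuit_of_card_le_three
    · simp [Finset.insert_subset_iff, hx, hy, hxy]
    · simp [hx0.symm, hy0.symm, hxy0.symm]
    · simp
    · rw [Finset.sum_insert hxy_notMem, Finset.sum_pair hne, ZModModule.add_self]
    · exact Finset.card_le_three
  have hsum := hτ.2 _ hcircuit
  rwa [Finset.sum_insert hxy_notMem, Finset.sum_pair hne, ← ZModModule.sub_eq_add,
    sub_eq_zero] at hsum

theorem exists_potential {ι : Type*} [DecidableEq ι] [Module (ZMod 2) Q]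
    {E : Finset (ι → ZMod 2)} {τ : (ι → ZMod 2) → Q} (hτ : IsMHom E F τ)
    (hE : ∀ i j, i ≠ j → ind i + ind j ∈ E) :
    ∃ φ : ι → Q, ∀ i j, i ≠ j → τ (ind i + ind j) = φ i + φ j := by
  cases isEmpty_or_nonempty ι with
  | inl _ => exact ⟨isEmptyElim, isEmptyElim⟩
  | inr hι =>
    obtain ⟨o⟩ := hι
    refine ⟨fun i => if i = o then 0 else τ (ind o + ind i), fun i j hij => ?_⟩
    rcases eq_or_ne i o with rfl | hi
    · simp [hij.symm]
    rcases eq_or_ne j o with rfl | hj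
    · simp [hi, add_comm]
    have hsplit : ind i + ind j = (ind o + ind i) + (ind o + ind j) := by
      rw [add_add_add_comm, ZModModule.add_self, zero_add]
    have hmem := hE i j hij
    rw [hsplit] at hmem
    simp only [hi, hj, if_false, hsplit,
      hτ.map_add (hE o i hi.symm) (hE o j hj.symm) hmem]

end IsMHom

theorem exists_star_or_subset_triangle {V : Type*} {S : Set (Sym2 V)} (hne : S.Nonempty)
    (hmeet : ∀ z ∈ S, ∀ w ∈ S, ∃ v, v ∈ z ∧ v ∈ w) :
    (∃ c, ∀ z ∈ S, c ∈ z) ∨ ∃ a b d, S ⊆ {s(a, b), s(b, d), s(a, d)} := by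
  by_contra! ⟨hstar, htriangle⟩
  have second_mem {x y : V} {z : Sym2 V} (hxy : s(x, y) ∈ S) (hz : z ∈ S) (hx : x ∉ z) :
      y ∈ z := by
    obtain ⟨v, hv, hvz⟩ := hmeet _ hxy _ hz
    rcases Sym2.mem_iff.1 hv with rfl | rfl
    exacts [absurd hvz hx, hvz]
  obtain ⟨⟨a, b⟩, hab⟩ := hne
  obtain ⟨z, hz, haz⟩ := hstar a
  obtain ⟨d, rfl⟩ := second_mem hab hz haz
  have hab_ne : a ≠ b := fun h => haz (by simp [h])
  have had_ne : a ≠ d := fun h => haz (by simp [h])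
  have eq_ad {w : Sym2 V} (hw : w ∈ S) (hbw : b ∉ w) : w = s(a, d) :=
    (Sym2.mem_and_mem_iff had_ne).1
      ⟨second_mem (Sym2.eq_swap ▸ hab) hw hbw, second_mem hz hw hbw⟩
  obtain ⟨w, hw, hbw⟩ := hstar b
  obtain rfl := eq_ad hw hbw
  have hbd_ne : b ≠ d := fun h => hbw (by simp [h])
  refine htriangle a b d fun x hx => ?_
  by_cases hbx : b ∈ x
  · by_cases hax : a ∈ x
    · exact Or.inl ((Sym2.mem_and_mem_iff hab_ne).1 ⟨hax, hbx⟩)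
    · exact Or.inr (Or.inl ((Sym2.mem_and_mem_iff hbd_ne).1 ⟨hbx, second_mem hw hx hax⟩))
  · exact Or.inr (Or.inr (eq_ad hx hbx))

theorem exists_forall_mem_of_four_le_encard {V : Type*} {S : Set (Sym2 V)}
    (hcard : 4 ≤ S.encard) (hmeet : ∀ z ∈ S, ∀ w ∈ S, ∃ v, v ∈ z ∧ v ∈ w) :
    ∃ c, ∀ z ∈ S, c ∈ z := by
  have hne : S.Nonempty := Set.encard_pos.1 (lt_of_lt_of_le (by norm_num) hcard)
  refine (exists_star_or_subset_triangle hne hmeet).resolve_right ?_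
  rintro ⟨a, b, d, hS⟩
  have hle : S.encard ≤ 3 := by
    grw [hS, Set.encard_insert_le, Set.encard_insert_le, Set.encard_singleton]
    norm_num
  exact absurd (hcard.trans hle) (by norm_num)

section GraphicMatroid

variable {V : Type*} [DecidableEq V]

/-- The point `𝟙_u + 𝟙_v` of the graphic matroid given by the unordered pair `uv`; it is `0` on the
diagonal. -/
def edgeVector : Sym2 V → V → ZMod 2 :=
  Sym2.lift ⟨fun u v => ind u + ind v, fun _ _ => add_comm _ _⟩

/-- The point set `E_G` of the graphic matroid `M(G)`. It is a `Set`, so that `V` may be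
infinite. -/
def graphicPoints (G : SimpleGraph V) : Set (V → ZMod 2) := edgeVector '' G.edgeSet

theorem mem_graphicPoints {G : SimpleGraph V} {x : V → ZMod 2} :
    x ∈ graphicPoints G ↔ ∃ u v, G.Adj u v ∧ x = ind u + ind v := by
  simp [graphicPoints, Sym2.exists, edgeVector, eq_comm]

theorem edgeVector_apply {z : Sym2 V} (hz : ¬z.IsDiag) (v : V) :
    edgeVector z v = if v ∈ z then 1 else 0 := by
  induction z with | _ a b =>
  have hab : a ≠ b := hz
  simp only [edgeVector, Sym2.lift_mk, Pi.add_apply, ind, Pi.single_apply, Sym2.mem_iff]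
  grind

theorem edgeVector_ne_zero {z : Sym2 V} (hz : ¬z.IsDiag) : edgeVector z ≠ 0 := fun h => by
  simpa [edgeVector_apply hz, z.out_fst_mem] using congrFun h z.out.1

theorem edgeVector_injOn : Set.InjOn edgeVector {z : Sym2 V | ¬z.IsDiag} := by
  intro z hz w hw h
  ext v
  have := congrFun h v
  rw [edgeVector_apply hz, edgeVector_apply hw] at this
  by_cases v ∈ z <;> by_cases v ∈ w <;> simp_all

theorem exists_mem_of_edgeVector_add_eq {z w t : Sym2 V} (hz : ¬z.IsDiag) (hw : ¬w.IsDiag)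
    (ht : ¬t.IsDiag) (h : edgeVector z + edgeVector w = edgeVector t) : ∃ v, v ∈ z ∧ v ∈ w := by
  by_contra! hdisj
  have mem_t {v : V} (hv : v ∈ z) : v ∈ t := by
    have := congrFun h v
    rw [Pi.add_apply, edgeVector_apply hz, edgeVector_apply hw, edgeVector_apply ht] at this
    simpa [hv, hdisj v hv] using this
  obtain rfl : t = z := by
    induction z with | _ a b =>
    exact (Sym2.mem_and_mem_iff hz).1 ⟨mem_t (by simp), mem_t (by simp)⟩
  exact edgeVector_ne_zero hw (add_eq_left.1 h)

theorem adj_of_ind_add_ind_mem_graphicPoints {G : SimpleGraph V} {u v : V} (huv : u ≠ v)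
    (h : ind u + ind v ∈ graphicPoints G) : G.Adj u v := by
  obtain ⟨z, hz, hzuv⟩ := h
  obtain rfl : z = s(u, v) := edgeVector_injOn (G.not_isDiag_of_mem_edgeSet hz) huv hzuv
  exact hz

variable {ι : Type*} {G : SimpleGraph V} {φ : ι → V → ZMod 2}

theorem injective_of_add_mem_graphicPoints
    (hφ : ∀ i j, i ≠ j → φ i + φ j ∈ graphicPoints G) : Function.Injective φ := by
  intro i j hij
  by_contra hne
  obtain ⟨z, hz, hsum⟩ := hφ i j hne
  rw [hij, ZModModule.add_self] at hsum
  exact edgeVector_ne_zero (G.not_isDiag_of_mem_edgeSet hz) hsum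

theorem exists_common_vertex_of_add_mem_graphicPoints (hι : 5 ≤ ENat.card ι)
    (hφ : ∀ i j, i ≠ j → φ i + φ j ∈ graphicPoints G) (o : ι) :
    ∃ c, ∀ j, j ≠ o → ∃ v, φ o + φ j = ind c + ind v := by
  choose e he hφe using fun j : ({o}ᶜ : Set ι) => hφ o j (Ne.symm j.2)
  have hdiag (j) : ¬(e j).IsDiag := G.not_isDiag_of_mem_edgeSet (he j)
  have hinj : Function.Injective e := fun i j hij => Subtype.ext <|
    injective_of_add_mem_graphicPoints hφ <| add_left_cancel <|
      (hφe i).symm.trans (hij ▸ hφe j)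
  have hcard : 4 ≤ (Set.range e).encard := by
    have hcompl := Set.encard_add_encard_compl ({o} : Set ι)
    rw [Set.encard_singleton, Set.encard_univ] at hcompl
    rw [← hcompl, show (5 : ℕ∞) = 1 + 4 by norm_num] at hι
    exact ((ENat.add_le_add_iff_left ENat.one_ne_top).1 hι).trans hinj.encard_range
  have hmeet : ∀ z ∈ Set.range e, ∀ w ∈ Set.range e, ∃ v, v ∈ z ∧ v ∈ w := by
    rintro _ ⟨i, rfl⟩ _ ⟨j, rfl⟩
    rcases eq_or_ne i j with rfl | hij
    · exact ⟨_, Sym2.out_fst_mem _, Sym2.out_fst_mem _⟩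
    obtain ⟨t, ht, hsum⟩ := hφ i j (Subtype.coe_ne_coe.2 hij)
    refine exists_mem_of_edgeVector_add_eq (hdiag i) (hdiag j)
      (G.not_isDiag_of_mem_edgeSet ht) ?_
    rw [hφe, hφe, hsum, add_add_add_comm, ZModModule.add_self, zero_add]
  obtain ⟨c, hc⟩ := exists_forall_mem_of_four_le_encard hcard hmeet
  refine ⟨c, fun j hj => ?_⟩
  obtain ⟨v, hv⟩ := hc _ ⟨⟨j, hj⟩, rfl⟩
  exact ⟨v, by rw [← hφe ⟨j, hj⟩, hv]; rfl⟩

theorem exists_eq_add_ind_of_add_mem_graphicPoints (hι : 5 ≤ ENat.card ι)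
    (hφ : ∀ i j, i ≠ j → φ i + φ j ∈ graphicPoints G) :
    ∃ (x : V → ZMod 2) (f : ι → V), ∀ i, φ i = x + ind (f i) := by
  obtain ⟨o⟩ : Nonempty ι := (ENat.card_pos_iff_nonempty ι).1 (lt_of_lt_of_le (by norm_num) hι)
  obtain ⟨c, hc⟩ := exists_common_vertex_of_add_mem_graphicPoints hι hφ o
  suffices ∀ i, ∃ v, φ i = φ o + ind c + ind v from ⟨φ o + ind c, Classical.skolem.1 this⟩
  intro i
  rcases eq_or_ne i o with rfl | hi
  · exact ⟨c, by rw [add_assoc, ZModModule.add_self, add_zero]⟩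
  · obtain ⟨v, hv⟩ := hc i hi
    exact ⟨v, by rw [add_assoc, ← hv, ← add_assoc, ZModModule.add_self, zero_add]⟩

end GraphicMatroid

theorem stmt17_general {ι V : Type*} [DecidableEq ι] [DecidableEq V] (hι : 5 ≤ ENat.card ι)
    {G : SimpleGraph V} {E : Finset (ι → ZMod 2)} {F : Finset (V → ZMod 2)}
    (hE : (E : Set (ι → ZMod 2)) = graphicPoints ⊤) (hF : (F : Set (V → ZMod 2)) = graphicPoints G)
    {τ : (ι → ZMod 2) → V → ZMod 2} (hτ : IsMHom E F τ) :
    ∃ f : (⊤ : SimpleGraph ι) →g G, ∀ i j, i ≠ j → τ (ind i + ind j) = ind (f i) + ind (f j) := by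
  have ind_mem (i j : ι) (hij : i ≠ j) : ind i + ind j ∈ E := by
    rw [← Finset.mem_coe, hE]
    exact mem_graphicPoints.2 ⟨i, j, hij, rfl⟩
  obtain ⟨φ, hτφ⟩ := hτ.exists_potential ind_mem
  have hφ (i j : ι) (hij : i ≠ j) : φ i + φ j ∈ graphicPoints G := by
    rw [← hτφ i j hij, ← hF]
    exact hτ.1 _ (ind_mem i j hij)
  obtain ⟨x, f, hφf⟩ := exists_eq_add_ind_of_add_mem_graphicPoints hι hφ
  have hsum (i j : ι) : φ i + φ j = ind (f i) + ind (f j) := by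
    rw [hφf, hφf, add_add_add_comm, ZModModule.add_self, zero_add]
  have hf : Function.Injective f := fun i j hij =>
    injective_of_add_mem_graphicPoints hφ (by rw [hφf, hφf, hij])
  exact ⟨⟨f, fun {i j} hij => adj_of_ind_add_ind_mem_graphicPoints (hf.ne hij)
    (hsum i j ▸ hφ i j hij)⟩, fun i j hij => (hτφ i j hij).trans (hsum i j)⟩

theorem stmt17 {V : Type*} [Fintype V] [DecidableEq V] (n : ℕ) (hn : 5 ≤ n)
    (G : SimpleGraph V)
    (Kn : Finset (Fin n → ZMod 2))
    (hKn : ∀ x, x ∈ Kn ↔ ∃ i j : Fin n, i ≠ j ∧ x = ind i + ind j)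
    (EG : Finset (V → ZMod 2))
    (hEG : ∀ x, x ∈ EG ↔ ∃ u v, G.Adj u v ∧ x = ind u + ind v)
    (τ : (Fin n → ZMod 2) → (V → ZMod 2)) (hτ : IsMHom Kn EG τ) :
    ∃ f : Fin n → V, Function.Injective f ∧
      (∀ i j, i ≠ j → G.Adj (f i) (f j)) ∧
      (∀ i j : Fin n, i ≠ j → τ (ind i + ind j) = ind (f i) + ind (f j)) := by
  obtain ⟨f, hf⟩ := stmt17_general (by simpa using hn)
    (Set.ext fun x => (hKn x).trans (mem_graphicPoints (G := ⊤)).symm)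
    (Set.ext fun x => (hEG x).trans mem_graphicPoints.symm) hτ
  exact ⟨f, f.injective_of_top_hom, fun _ _ => f.map_adj, hf⟩
end

section
/- Let E = {𝟙_i + 𝟙_{i+1 mod 5} : i ∈ Fin 5} ⊆ (Fin 5 → ZMod 2) be the point set of the graphic matroid M(C_5) and let F be the set of the three nonzero vectors of (Fin 2 → ZMod 2), the point set of M(K_3). Then there are exactly 60 matroid homomorphisms from E to F, and any two of them are joined by a walk in the recolouring graph mCol(E, F); that is, mCol(M(C_5), M(K_3)) is connected. -/
/-!
In a matroid whose ground set `E` is a single circuit, the homomorphisms to the set `F` of nonzero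
vectors are the functions `E → F` with sum zero, and the cocircuits are the pairs of points.

For the count, all but one of the values of a sum-zero function are arbitrary elements of `F`,
subject only to their sum being nonzero; so the numbers `a n` of sum-zero `n`-tuples satisfy
`a (n + 1) + a n = |F| ^ n`.

For connectedness, let `τ ≠ σ` be homomorphisms. They disagree at two distinct points `i` and `j`,
as their sums agree. Put `d = τ i + σ i`. Adding `d` to `τ` on `{i, j}` makes it agree with `σ`
at `i`, and adding `d` to `σ` on `{i, j}` makes it agree with `τ` at `i`. The first is again a
homomorphism unless `τ j = d`, the second unless `σ j = d`, and these cannot both happen because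
`τ j ≠ σ j`. Either way the disagreement shrinks.
-/

section Walk

variable {P Q : Type*} [AddCommGroup P] [AddCommGroup Q] [DecidableEq P]
  {E : Finset P} {F : Finset Q} {τ σ : P → Q}

theorem MAdj.symm (h : MAdj E τ σ) : MAdj E σ τ := by
  obtain ⟨C, hC, hdiff⟩ := h
  exact ⟨C, hC, fun e he => by rw [ne_comm, hdiff e he]⟩

theorem MStep.symm (h : MStep E F τ σ) : MStep E F σ τ :=
  ⟨h.2.1, h.1, h.2.2.imp (fun heq e he => (heq e he).symm) MAdj.symm⟩

end Walk

section Recolour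

variable {P Q : Type*} [DecidableEq P] [AddCommGroup Q]
  {E C : Finset P} {F : Finset Q} {τ : P → Q} {d : Q} {e : P}

/-- The recolouring of `τ` that adds `d` to the colour of every point of `C`. -/
def recolour (C : Finset P) (d : Q) (τ : P → Q) : P → Q :=
  fun e => if e ∈ C then τ e + d else τ e

theorem recolour_of_mem (he : e ∈ C) : recolour C d τ e = τ e + d := if_pos he

theorem recolour_of_notMem (he : e ∉ C) : recolour C d τ e = τ e := if_neg he

theorem recolour_ne_self_iff (hd : d ≠ 0) : recolour C d τ e ≠ τ e ↔ e ∈ C := by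
  by_cases he : e ∈ C
  · simp [recolour_of_mem he, he, hd]
  · simp [recolour_of_notMem he, he]

theorem sum_recolour (Z : Finset P) :
    ∑ e ∈ Z, recolour C d τ e = ∑ e ∈ Z, τ e + (C ∩ Z).card • d := by
  have hsplit (e : P) : recolour C d τ e = τ e + if e ∈ C then d else 0 := by
    simp only [recolour, apply_ite (τ e + ·), add_zero]
  rw [Finset.sum_congr rfl fun e _ => hsplit e, Finset.sum_add_distrib, ← Finset.sum_filter,
    Finset.sum_const, Finset.filter_mem_eq_inter, Finset.inter_comm]

variable [Module (ZMod 2) Q]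

theorem IsMHom.isMHom_recolour [AddCommGroup P] (hF : ∀ x, x ∈ F ↔ x ≠ 0) (hτ : IsMHom E F τ)
    (hC : IsCocircuit E C) (hCd : ∀ e ∈ C, τ e ≠ d) : IsMHom E F (recolour C d τ) := by
  refine ⟨fun e he => ?_, fun Z hZ => ?_⟩
  · by_cases heC : e ∈ C
    · rw [recolour_of_mem heC, hF, ← ZModModule.sub_eq_add, sub_ne_zero]
      exact hCd e heC
    · rw [recolour_of_notMem heC]
      exact hτ.1 e he
  · obtain ⟨k, hk⟩ := hC.2.2.1 Z hZ
    rw [sum_recolour, hτ.2 Z hZ, hk, add_nsmul, ZModModule.add_self, add_zero]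

theorem IsMHom.mStep_recolour [AddCommGroup P] (hF : ∀ x, x ∈ F ↔ x ≠ 0) (hτ : IsMHom E F τ)
    (hC : IsCocircuit E C) (hd : d ≠ 0) (hCd : ∀ e ∈ C, τ e ≠ d) :
    MStep E F τ (recolour C d τ) :=
  ⟨hτ, hτ.isMHom_recolour hF hC hCd,
    Or.inr ⟨C, hC, fun _ _ => by rw [ne_comm, recolour_ne_self_iff hd]⟩⟩

end Recolour

section Disagreement

variable {P Q : Type*} [DecidableEq Q] {E : Finset P} {τ σ : P → Q} {e i j : P}

/-- The set of points of `E` at which the colourings `τ` and `σ` differ; its size measures the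
progress of a walk from `τ` to `σ`. -/
def disagreement (E : Finset P) (τ σ : P → Q) : Finset P := {e ∈ E | τ e ≠ σ e}

theorem mem_disagreement : e ∈ disagreement E τ σ ↔ e ∈ E ∧ τ e ≠ σ e := Finset.mem_filter

theorem disagreement_comm (E : Finset P) (τ σ : P → Q) :
    disagreement E τ σ = disagreement E σ τ := by
  simp only [disagreement, ne_comm]

theorem one_lt_card_disagreement [AddCommGroup Q] (hsum : ∑ e ∈ E, τ e = ∑ e ∈ E, σ e)
    (hne : ∃ e ∈ E, τ e ≠ σ e) : 1 < (disagreement E τ σ).card := by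
  obtain ⟨i, hi, hτσ⟩ := hne
  by_contra! hcard
  have hagree : ∀ e ∈ E, e ≠ i → τ e - σ e = 0 := fun e he hei =>
    sub_eq_zero.2 <| not_not.1 fun h => hei <|
      Finset.card_le_one.1 hcard e (mem_disagreement.2 ⟨he, h⟩) i (mem_disagreement.2 ⟨hi, hτσ⟩)
  refine sub_ne_zero.2 hτσ ?_
  rw [← Finset.sum_eq_single_of_mem i hi hagree, Finset.sum_sub_distrib, hsum, sub_self]

theorem disagreement_recolour_ssubset [DecidableEq P] [AddCommGroup Q] [Module (ZMod 2) Q]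
    (hi : i ∈ disagreement E τ σ) (hj : j ∈ disagreement E τ σ) :
    disagreement E (recolour {i, j} (τ i + σ i) τ) σ ⊂ disagreement E τ σ := by
  have hfixed : recolour {i, j} (τ i + σ i) τ i = σ i := by
    rw [recolour_of_mem (Finset.mem_insert_self i _), ← add_assoc, ZModModule.add_self, zero_add]
  refine Finset.ssubset_iff_of_subset (fun e he => ?_) |>.2
    ⟨i, hi, fun h => (mem_disagreement.1 h).2 hfixed⟩
  by_cases hC : e ∈ ({i, j} : Finset P)
  · rcases Finset.mem_insert.1 hC with rfl | hej
    · exact hi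
    · exact Finset.mem_singleton.1 hej ▸ hj
  · rwa [mem_disagreement, recolour_of_notMem hC, ← mem_disagreement] at he

end Disagreement

section Circuit

variable {P Q : Type*} [AddCommGroup P] [AddCommGroup Q]
  {E : Finset P} {F : Finset Q} {τ σ : P → Q} {i j : P}

theorem IsCircuit.isCircuit_iff_eq (hE : IsCircuit E E) {Z : Finset P} :
    IsCircuit E Z ↔ Z = E :=
  ⟨fun hZ => hE.2.2.2 Z hZ.1 hZ.2.1 hZ.2.2.1, fun hZ => hZ ▸ hE⟩

theorem IsCircuit.isMHom_iff (hE : IsCircuit E E) :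
    IsMHom E F τ ↔ (∀ e ∈ E, τ e ∈ F) ∧ ∑ e ∈ E, τ e = 0 := by
  simp only [IsMHom, hE.isCircuit_iff_eq, forall_eq]

theorem IsCircuit.isCocircuit_pair [DecidableEq P] (hE : IsCircuit E E)
    (hi : i ∈ E) (hj : j ∈ E) (hij : i ≠ j) : IsCocircuit E {i, j} := by
  have hsub : {i, j} ⊆ E := Finset.insert_subset hi (Finset.singleton_subset_iff.2 hj)
  simp only [IsCocircuit, hE.isCircuit_iff_eq, forall_eq]
  refine ⟨hsub, Finset.insert_nonempty i _, ?_, fun C hC hne heven => ?_⟩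
  · rw [Finset.inter_eq_left.2 hsub, Finset.card_pair hij]
    exact even_two
  · rw [Finset.inter_eq_left.2 (hC.trans hsub)] at heven
    refine Finset.eq_of_subset_of_card_le hC ?_
    rw [Finset.card_pair hij]
    exact Nat.le_of_dvd hne.card_pos heven.two_dvd

theorem IsCircuit.exists_mStep_disagreement_ssubset [DecidableEq P] [DecidableEq Q]
    [Module (ZMod 2) Q] (hE : IsCircuit E E) (hF : ∀ x, x ∈ F ↔ x ≠ 0)
    (hτ : IsMHom E F τ) (hσ : IsMHom E F σ) (hne : ∃ e ∈ E, τ e ≠ σ e) :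
    (∃ τ', MStep E F τ τ' ∧ disagreement E τ' σ ⊂ disagreement E τ σ) ∨
      ∃ σ', MStep E F σ σ' ∧ disagreement E τ σ' ⊂ disagreement E τ σ := by
  have hsum : ∑ e ∈ E, τ e = ∑ e ∈ E, σ e :=
    (hτ.2 E hE).trans (hσ.2 E hE).symm
  obtain ⟨i, hi, j, hj, hij⟩ := Finset.one_lt_card.1 (one_lt_card_disagreement hsum hne)
  obtain ⟨hiE, hτσi⟩ := mem_disagreement.1 hi
  obtain ⟨hjE, hτσj⟩ := mem_disagreement.1 hj
  have hC : IsCocircuit E {i, j} := hE.isCocircuit_pair hiE hjE hij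
  have hd : τ i + σ i ≠ 0 := by rwa [← ZModModule.sub_eq_add, sub_ne_zero]
  have hτi : τ i ≠ τ i + σ i := left_ne_add.2 ((hF _).1 (hσ.1 i hiE))
  have hσi : σ i ≠ τ i + σ i := right_ne_add.2 ((hF _).1 (hτ.1 i hiE))
  by_cases hτj : τ j = τ i + σ i
  · have hσj : σ j ≠ τ i + σ i := fun h => hτσj (hτj.trans h.symm)
    refine Or.inr ⟨_, hσ.mStep_recolour hF hC hd (by simp [hσi, hσj]), ?_⟩
    rw [disagreement_comm E τ σ] at hi hj ⊢
    rw [disagreement_comm, add_comm (τ i)]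
    exact disagreement_recolour_ssubset hi hj
  · exact Or.inl ⟨_, hτ.mStep_recolour hF hC hd (by simp [hτi, hτj]),
      disagreement_recolour_ssubset hi hj⟩

theorem IsCircuit.mWalk [DecidableEq P] [Module (ZMod 2) Q] (hE : IsCircuit E E)
    (hF : ∀ x, x ∈ F ↔ x ≠ 0) (hτ : IsMHom E F τ) (hσ : IsMHom E F σ) : MWalk E F τ σ := by
  classical
  induction hD : disagreement E τ σ using Finset.strongInduction generalizing τ σ with
  | H D ih =>
    subst hD
    by_cases hne : ∃ e ∈ E, τ e ≠ σ e
    · rcases hE.exists_mStep_disagreement_ssubset hF hτ hσ hne with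
        ⟨τ', hstep, hlt⟩ | ⟨σ', hstep, hlt⟩
      · exact (ih _ hlt hstep.2.1 hσ rfl).head hstep
      · exact (ih _ hlt hτ hstep.2.1 rfl).tail hstep.symm
    · push Not at hne
      exact .single ⟨hτ, hσ, Or.inl hne⟩

end Circuit

section Count

variable {Q : Type*} [AddCommGroup Q] [DecidableEq Q]

/-- The families `ι → F` with sum zero, as functions `ι → Q`. They encode the homomorphisms to `F`
from a circuit with point set `ι`. -/
def zeroSumFamilies (ι : Type*) [Fintype ι] [DecidableEq ι] (F : Finset Q) : Finset (ι → Q) :=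
  {c ∈ Fintype.piFinset fun _ => F | ∑ i, c i = 0}

variable {ι κ : Type*} [Fintype ι] [DecidableEq ι] [Fintype κ] [DecidableEq κ] {F : Finset Q}

theorem mem_zeroSumFamilies {c : ι → Q} :
    c ∈ zeroSumFamilies ι F ↔ (∀ i, c i ∈ F) ∧ ∑ i, c i = 0 := by
  simp only [zeroSumFamilies, Finset.mem_filter, Fintype.mem_piFinset]

theorem card_zeroSumFamilies_congr (e : ι ≃ κ) :
    (zeroSumFamilies ι F).card = (zeroSumFamilies κ F).card := by
  refine Finset.card_equiv (e.arrowCongr (.refl Q)) fun c => ?_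
  simp only [mem_zeroSumFamilies, Equiv.arrowCongr_apply, Equiv.coe_refl, Function.comp_apply,
    id_eq, e.symm.forall_congr_right (q := fun i => c i ∈ F), e.symm.sum_comp]

theorem card_zeroSumFamilies_fin_succ (hF : ∀ x, x ∈ F ↔ x ≠ 0) (n : ℕ) :
    (zeroSumFamilies (Fin (n + 1)) F).card =
      {c ∈ Fintype.piFinset fun _ : Fin n => F | ∑ i, c i ≠ 0}.card := by
  refine Finset.card_nbij' Fin.tail (fun c => Fin.cons (-∑ i, c i) c) ?_ ?_ ?_ ?_
  · intro c hc
    obtain ⟨hcF, hsum⟩ := mem_zeroSumFamilies.1 hc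
    rw [Fin.sum_univ_succ, add_eq_zero_iff_neg_eq'] at hsum
    exact Finset.mem_filter.2 ⟨Fintype.mem_piFinset.2 fun i => hcF i.succ,
      neg_ne_zero.1 (hsum ▸ (hF _).1 (hcF 0))⟩
  · intro c hc
    obtain ⟨hcF, hsum⟩ := Finset.mem_filter.1 hc
    have hhead : -∑ i, c i ∈ F := (hF _).2 (neg_ne_zero.2 hsum)
    refine mem_zeroSumFamilies.2 ⟨Fin.cases hhead (Fintype.mem_piFinset.1 hcF), ?_⟩
    simp only [Fin.sum_univ_succ, Fin.cons_zero, Fin.cons_succ, neg_add_cancel]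
  · intro c hc
    have hsum := (mem_zeroSumFamilies.1 hc).2
    rw [Fin.sum_univ_succ, add_eq_zero_iff_neg_eq'] at hsum
    exact (congrArg (Fin.cons · (Fin.tail c)) hsum).trans (Fin.cons_self_tail c)
  · intro c _
    exact Fin.tail_cons _ _

theorem card_zeroSumFamilies_fin_succ_add (hF : ∀ x, x ∈ F ↔ x ≠ 0) (n : ℕ) :
    (zeroSumFamilies (Fin (n + 1)) F).card + (zeroSumFamilies (Fin n) F).card = F.card ^ n := by
  rw [card_zeroSumFamilies_fin_succ hF, add_comm, zeroSumFamilies,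
    Finset.card_filter_add_card_filter_not, Fintype.card_piFinset_const]

theorem card_zeroSumFamilies (hF : ∀ x, x ∈ F ↔ x ≠ 0) :
    ((F.card : ℤ) + 1) * (zeroSumFamilies ι F).card =
      F.card ^ Fintype.card ι + (-1) ^ Fintype.card ι * F.card := by
  rw [card_zeroSumFamilies_congr (Fintype.equivFin ι)]
  induction Fintype.card ι with
  | zero => simp [zeroSumFamilies, add_comm]
  | succ n ih =>
    have hrec : ((zeroSumFamilies (Fin (n + 1)) F).card : ℤ) + (zeroSumFamilies (Fin n) F).card =
        (F.card : ℤ) ^ n := mod_cast card_zeroSumFamilies_fin_succ_add hF n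
    linear_combination ((F.card : ℤ) + 1) * hrec - ih

end Count

section CircuitCount

variable {P Q : Type*} [AddCommGroup P] [DecidableEq P] [AddCommGroup Q] [DecidableEq Q]
  {E : Finset P}

theorem IsCircuit.mem_zeroSumFamilies_iff_exists_isMHom (hE : IsCircuit E E) {F : Finset Q}
    {g : {x // x ∈ E} → Q} :
    g ∈ zeroSumFamilies {x // x ∈ E} F ↔
      ∃ τ : P → Q, IsMHom E F τ ∧ ∀ e : {x // x ∈ E}, g e = τ e.1 := by
  have hrestrict (τ : P → Q) :
      IsMHom E F τ ↔ (fun e : {x // x ∈ E} => τ e.1) ∈ zeroSumFamilies {x // x ∈ E} F := by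
    rw [hE.isMHom_iff, mem_zeroSumFamilies, Finset.sum_coe_sort E τ, Subtype.forall]
  simp only [hrestrict, ← funext_iff]
  refine ⟨fun hg => ?_, fun ⟨_, hτ, hgτ⟩ => hgτ ▸ hτ⟩
  have hextend : (fun e : {x // x ∈ E} => Function.extend Subtype.val g 0 e.1) = g :=
    funext (Subtype.val_injective.extend_apply g 0)
  exact ⟨Function.extend Subtype.val g 0, hextend.symm ▸ hg, hextend.symm⟩

theorem IsCircuit.card_mHom (hE : IsCircuit E E) (F : Finset Q) :
    Nat.card {g : {x // x ∈ E} → Q //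
        ∃ τ : P → Q, IsMHom E F τ ∧ ∀ e : {x // x ∈ E}, g e = τ e.1} =
      (zeroSumFamilies {x // x ∈ E} F).card :=
  Nat.subtype_card _ fun _ => hE.mem_zeroSumFamilies_iff_exists_isMHom

end CircuitCount

section Cycle

variable {n : ℕ} [NeZero n]

/-- The point `𝟙_i + 𝟙_{i+1}` of the graphic matroid of the cycle on `Fin n`, where `i + 1` is
taken modulo `n`. -/
def cyclePoint (i : Fin n) : Fin n → ZMod 2 := ind i + ind (i + 1)

theorem sum_cyclePoint_apply (s : Finset (Fin n)) (k : Fin n) :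
    (∑ i ∈ s, cyclePoint i) (k + 1) =
      (if k + 1 ∈ s then 1 else 0) + (if k ∈ s then 1 else 0) := by
  simp [cyclePoint, ind, Finset.sum_add_distrib, Pi.single_apply]

theorem sum_univ_cyclePoint : ∑ i : Fin n, cyclePoint i = 0 := by
  simp only [cyclePoint, Finset.sum_add_distrib]
  have hshift : ∑ i : Fin n, ind (i + 1) = ∑ i, ind i :=
    Equiv.sum_comp (Equiv.addRight 1) ind
  rw [hshift, ZModModule.add_self]

open scoped Fin.CommRing in
theorem eq_univ_of_forall_add_one_mem {s : Finset (Fin n)} (hs : s.Nonempty)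
    (hsucc : ∀ i ∈ s, i + 1 ∈ s) : s = Finset.univ := by
  obtain ⟨a, ha⟩ := hs
  have hmem (m : ℕ) : a + (m : Fin n) ∈ s := by
    induction m with
    | zero => rwa [Nat.cast_zero, add_zero]
    | succ m ih => simpa only [Nat.cast_succ, add_assoc] using hsucc _ ih
  refine Finset.eq_univ_of_forall fun b => ?_
  simpa only [Fin.cast_val_eq_self, add_sub_cancel] using hmem (b - a).val

theorem eq_univ_of_sum_cyclePoint_eq_zero {s : Finset (Fin n)} (hs : s.Nonempty)
    (hsum : ∑ i ∈ s, cyclePoint i = 0) : s = Finset.univ := by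
  refine eq_univ_of_forall_add_one_mem hs fun k hk => ?_
  by_contra hk'
  have hcoord := sum_cyclePoint_apply s k
  rw [hsum, if_pos hk, if_neg hk', zero_add] at hcoord
  exact zero_ne_one hcoord

theorem cyclePoint_injective (hn : 2 < n) :
    Function.Injective (cyclePoint : Fin n → Fin n → ZMod 2) := by
  intro i j hij
  by_contra hne
  have hsum : ∑ k ∈ {i, j}, cyclePoint k = 0 := by
    rw [Finset.sum_pair hne, hij, ZModModule.add_self]
  have hcard := congrArg Finset.card
    (eq_univ_of_sum_cyclePoint_eq_zero (Finset.insert_nonempty i {j}) hsum)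
  rw [Finset.card_pair hne, Finset.card_fin] at hcard
  exact hn.ne hcard

variable {E : Finset (Fin n → ZMod 2)}

theorem eq_image_cyclePoint (hE : ∀ x, x ∈ E ↔ ∃ i : Fin n, x = cyclePoint i) :
    E = Finset.univ.image cyclePoint := by
  ext x
  simp only [hE, Finset.mem_image, Finset.mem_univ, true_and, eq_comm]

theorem card_of_mem_iff_cyclePoint (hn : 2 < n)
    (hE : ∀ x, x ∈ E ↔ ∃ i : Fin n, x = cyclePoint i) : E.card = n := by
  rw [eq_image_cyclePoint hE, Finset.card_image_of_injective _ (cyclePoint_injective hn),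
    Finset.card_fin]

theorem isCircuit_of_mem_iff_cyclePoint (hn : 2 < n)
    (hE : ∀ x, x ∈ E ↔ ∃ i : Fin n, x = cyclePoint i) : IsCircuit E E := by
  obtain rfl := eq_image_cyclePoint hE
  refine ⟨subset_rfl, Finset.univ_nonempty.image _, ?_, fun Z hZ hne hsum => ?_⟩
  · rw [Finset.sum_image (cyclePoint_injective hn).injOn, sum_univ_cyclePoint]
  · obtain ⟨s, -, rfl⟩ := Finset.subset_image_iff.1 hZ
    rw [Finset.sum_image (cyclePoint_injective hn).injOn] at hsum
    rw [eq_univ_of_sum_cyclePoint_eq_zero (Finset.image_nonempty.1 hne) hsum]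

end Cycle

theorem card_add_one_of_mem_iff_ne_zero {Q : Type*} [Zero Q] [Fintype Q] {F : Finset Q}
    (hF : ∀ x, x ∈ F ↔ x ≠ 0) : F.card + 1 = Fintype.card Q := by
  classical
  have hF' : F = Finset.univ.erase 0 := by
    ext x
    rw [hF, Finset.mem_erase, and_iff_left (Finset.mem_univ x)]
  rw [hF', Finset.card_erase_add_one (Finset.mem_univ 0), Finset.card_univ]

theorem stmt18_general {P Q : Type*} [AddCommGroup P] [DecidableEq P] [AddCommGroup Q]
    [Module (ZMod 2) Q] (E : Finset P) (F : Finset Q) (hE : IsCircuit E E)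
    (hF : ∀ x, x ∈ F ↔ x ≠ 0) :
    ((F.card : ℤ) + 1) * Nat.card {g : {x // x ∈ E} → Q //
        ∃ τ : P → Q, IsMHom E F τ ∧ ∀ e : {x // x ∈ E}, g e = τ e.1} =
      F.card ^ E.card + (-1) ^ E.card * F.card ∧
    ∀ τ σ : P → Q, IsMHom E F τ → IsMHom E F σ → MWalk E F τ σ := by
  classical
  refine ⟨?_, fun τ σ hτ hσ => hE.mWalk hF hτ hσ⟩
  rw [hE.card_mHom F, card_zeroSumFamilies hF, Fintype.card_coe]

theorem stmt18 (E : Finset (Fin 5 → ZMod 2)) (F : Finset (Fin 2 → ZMod 2))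
    (hE : ∀ x, x ∈ E ↔ ∃ i : Fin 5, x = ind i + ind (i + 1))
    (hF : ∀ x, x ∈ F ↔ x ≠ 0) :
    Nat.card {g : {x // x ∈ E} → (Fin 2 → ZMod 2) //
        ∃ τ : (Fin 5 → ZMod 2) → (Fin 2 → ZMod 2),
          IsMHom E F τ ∧ ∀ e : {x // x ∈ E}, g e = τ e.1} = 60 ∧
    ∀ τ σ : (Fin 5 → ZMod 2) → (Fin 2 → ZMod 2),
      IsMHom E F τ → IsMHom E F σ → MWalk E F τ σ := by
  obtain ⟨hcount, hwalk⟩ :=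
    stmt18_general E F (isCircuit_of_mem_iff_cyclePoint (by decide) hE) hF
  have hFcard : F.card + 1 = 4 := card_add_one_of_mem_iff_ne_zero hF
  rw [card_of_mem_iff_cyclePoint (by decide) hE, Nat.succ.inj hFcard] at hcount
  exact ⟨by lia, hwalk⟩
end
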